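/- Let 0 ≤ α < 1 and let ν ≥ 0. Let j > 0 and j′ > 0 be two distinct zeros of J_ν, i.e. J_ν(j) = J_ν(j′) = 0 and j ≠ j′. Define Φ_j(x) = x^{(1−α)/2} · J_ν(j · x^{(2−α)/2}) and Φ_{j′}(x) = x^{(1−α)/2} · J_ν(j′ · x^{(2−α)/2}) for x ∈ (0,1). Then ∫₀¹ Φ_j(x) · Φ_{j′}(x) dx = 0. -/

import Mathlib

/-- The Bessel function of the first kind of order `ν`, defined by its power series:
`J_ν(x) = ∑_{m=0}^∞ ((-1)^m / (m! Γ(m+ν+1))) (x/2)^(2m+ν)`. -/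
noncomputable def besselJ (ν : ℝ) (x : ℝ) : ℝ :=
  ∑' m : ℕ, ((-1 : ℝ) ^ m / ((m.factorial : ℝ) * Real.Gamma ((m : ℝ) + ν + 1))) *
    (x / 2) ^ (2 * (m : ℝ) + ν)

open MeasureTheory

noncomputable def bc (μ : ℝ) (m : ℕ) : ℝ :=
  (-1 : ℝ) ^ m / ((m.factorial : ℝ) * Real.Gamma ((m : ℝ) + μ + 1))

noncomputable def bg (μ z : ℝ) : ℝ := ∑' m : ℕ, bc μ m * z ^ m

lemma bc_gamma_pos {μ : ℝ} (hμ : 0 ≤ μ) (m : ℕ) : 0 < Real.Gamma ((m : ℝ) + μ + 1) :=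
  Real.Gamma_pos_of_pos (by positivity)

lemma bc_ne {μ : ℝ} (hμ : 0 ≤ μ) (m : ℕ) : bc μ m ≠ 0 := by
  have := bc_gamma_pos hμ m
  unfold bc
  have h2 : (m.factorial : ℝ) ≠ 0 := by positivity
  exact div_ne_zero (by simp) (mul_ne_zero h2 this.ne')

lemma bc_rec {μ : ℝ} (hμ : 0 ≤ μ) (m : ℕ) :
    bc μ (m + 1) * (((m : ℝ) + 1) * ((m : ℝ) + μ + 1)) = - bc μ m := by
  have h1 := bc_gamma_pos hμ m
  have h3 : Real.Gamma (((m + 1 : ℕ) : ℝ) + μ + 1) =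
      ((m : ℝ) + μ + 1) * Real.Gamma ((m : ℝ) + μ + 1) := by
    rw [← Real.Gamma_add_one (by positivity)]
    congr 1; push_cast; ring
  have h2 : (m.factorial : ℝ) ≠ 0 := by positivity
  have h4 : (m : ℝ) + μ + 1 ≠ 0 := by positivity
  have h5 : (m : ℝ) + 1 ≠ 0 := by positivity
  unfold bc
  rw [h3, Nat.factorial_succ]
  push_cast
  field_simp
  ring

lemma bc_shift {μ : ℝ} (m : ℕ) :
    bc μ (m + 1) * ((m : ℝ) + 1) = - bc (μ + 1) m := by
  have h5 : (m : ℝ) + 1 ≠ 0 := by positivity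
  have h2 : (m.factorial : ℝ) ≠ 0 := by positivity
  unfold bc
  rw [Nat.factorial_succ]
  push_cast
  rw [show (m : ℝ) + 1 + μ + 1 = (m : ℝ) + (μ + 1) + 1 by ring]
  field_simp
  ring

lemma bc_shift' {μ : ℝ} (hμ : 0 ≤ μ) (m : ℕ) :
    ((m : ℝ) + μ + 1) * bc (μ + 1) m = bc μ m := by
  linear_combination bc_rec hμ m * (-1) + ((m : ℝ) + μ + 1) * bc_shift (μ := μ) m * (1)

lemma bc_summable {μ : ℝ} (hμ : 0 ≤ μ) (z : ℝ) : Summable fun m => bc μ m * z ^ m := by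
  rcases eq_or_ne z 0 with rfl | hz
  · refine summable_of_ne_finset_zero (s := {0}) ?_
    intro b hb
    simp at hb
    simp [hb]
  refine summable_of_ratio_test_tendsto_lt_one (l := 0) one_pos
    (Filter.Eventually.of_forall fun m => mul_ne_zero (bc_ne hμ m) (pow_ne_zero _ hz)) ?_
  have key : ∀ m : ℕ, ‖bc μ (m + 1) * z ^ (m + 1)‖ / ‖bc μ m * z ^ m‖
      = |z| / (((m : ℝ) + 1) * ((m : ℝ) + μ + 1)) := by
    intro m
    have h0 := bc_ne hμ m
    have h4 : 0 < ((m : ℝ) + 1) * ((m : ℝ) + μ + 1) := by positivity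
    rw [← norm_div, ← abs_of_pos h4, ← Real.norm_eq_abs, ← Real.norm_eq_abs, ← norm_div]
    rw [← norm_neg]
    congr 1
    have h6 : bc μ m = - (bc μ (m + 1) * (((m : ℝ) + 1) * ((m : ℝ) + μ + 1))) := by
      rw [bc_rec hμ]; ring
    have := bc_ne hμ (m + 1)
    rw [h6, pow_succ]
    have h8 : (m : ℝ) + μ + 1 ≠ 0 := by positivity
    field_simp
  simp_rw [key]
  have hlim : Filter.Tendsto (fun m : ℕ => |z| / (m : ℝ)) Filter.atTop (nhds 0) :=
    tendsto_const_div_atTop_nhds_zero_nat _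
  refine squeeze_zero' (Filter.Eventually.of_forall fun m => by positivity) ?_ hlim
  filter_upwards [Filter.eventually_gt_atTop 0] with m hm
  have hm' : (0 : ℝ) < m := by exact_mod_cast hm
  gcongr
  nlinarith [mul_nonneg hm'.le hμ, mul_pos hm' hm']

lemma bg_hasDerivAt {μ : ℝ} (hμ : 0 ≤ μ) (z : ℝ) : HasDerivAt (bg μ) (- bg (μ + 1) z) z := by
  have hs : ∀ y : ℝ, (fun m : ℕ => bc μ (m + 1) * (((m + 1 : ℕ) : ℝ) * y ^ (m + 1 - 1)))
      = fun m => - (bc (μ + 1) m * y ^ m) := by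
    intro y
    funext m
    push_cast
    linear_combination y ^ m * bc_shift (μ := μ) m
  have hsum : ∀ y : ℝ, Summable fun m : ℕ => bc μ m * ((m : ℝ) * y ^ (m - 1)) := by
    intro y
    rw [← summable_nat_add_iff 1, hs y]
    exact (bc_summable (by positivity) y).neg
  have hval : ∑' m : ℕ, bc μ m * ((m : ℝ) * z ^ (m - 1)) = - bg (μ + 1) z := by
    rw [(hsum z).tsum_eq_zero_add, hs z, tsum_neg]
    simp [bg]
  rw [← hval]
  refine hasDerivAt_tsum_of_isPreconnected
    (u := fun m : ℕ => ‖bc μ m * ((m : ℝ) * (|z| + 1) ^ (m - 1))‖)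
    (hsum (|z| + 1)).norm (t := Metric.ball 0 (|z| + 1)) Metric.isOpen_ball
    (convex_ball _ _).isPreconnected
    (g := fun (m : ℕ) z => bc μ m * z ^ m)
    (g' := fun (m : ℕ) y => bc μ m * ((m : ℝ) * y ^ (m - 1)))
    (fun m y _ => (hasDerivAt_pow m y).const_mul _) ?_ (y₀ := z) ?_ (bc_summable hμ z) ?_
  · intro m y hy
    have hy' : |y| ≤ |z| + 1 := by
      have := hy; simp at this; exact this.le
    simp only [norm_mul, norm_pow, Real.norm_eq_abs]
    rw [abs_of_nonneg (show 0 ≤ |z| + 1 by positivity)]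
    gcongr
  · simp
  · simp

lemma bg_ode {μ : ℝ} (hμ : 0 ≤ μ) (z : ℝ) :
    z * bg (μ + 1 + 1) z - (μ + 1) * bg (μ + 1) z + bg μ z = 0 := by
  have s0 := bc_summable hμ z
  have s1 := bc_summable (show 0 ≤ μ + 1 by positivity) z
  have s2 := bc_summable (show 0 ≤ μ + 1 + 1 by positivity) z
  have e : ∀ m, bc μ m * z ^ m - (μ + 1) * (bc (μ + 1) m * z ^ m)
      = (m : ℝ) * (bc (μ + 1) m * z ^ m) := by
    intro m
    linear_combination - z ^ m * bc_shift' hμ m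
  have hS := s0.sub (s1.mul_left (μ + 1))
  have h1 : bg μ z - (μ + 1) * bg (μ + 1) z
      = ∑' m : ℕ, (m : ℝ) * (bc (μ + 1) m * z ^ m) := by
    unfold bg
    rw [← tsum_mul_left, ← s0.tsum_sub (s1.mul_left _)]
    exact tsum_congr e
  have h2 : z * bg (μ + 1 + 1) z = - ∑' m : ℕ, (m : ℝ) * (bc (μ + 1) m * z ^ m) := by
    rw [Summable.tsum_eq_zero_add (by simpa only [e] using hS)]
    unfold bg
    rw [← tsum_mul_left, Nat.cast_zero, zero_mul, zero_add, ← tsum_neg]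
    refine tsum_congr fun m => ?_
    push_cast
    linear_combination z ^ (m + 1) * bc_shift (μ := μ + 1) m
  linarith

lemma bg_continuous {μ : ℝ} (hμ : 0 ≤ μ) : Continuous (bg μ) :=
  continuous_iff_continuousAt.2 fun z => (bg_hasDerivAt hμ z).continuousAt

lemma besselJ_eq (ν : ℝ) {x : ℝ} (hx : 0 < x) :
    besselJ ν x = (x / 2) ^ ν * bg ν (x ^ 2 / 4) := by
  unfold besselJ bg
  rw [← tsum_mul_left]
  refine tsum_congr fun m => ?_
  rw [Real.rpow_add (by positivity), show (2 * (m : ℝ)) = ((2 * m : ℕ) : ℝ) by push_cast; ring,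
    Real.rpow_natCast, pow_mul, show (x / 2) ^ 2 = x ^ 2 / 4 by ring]
  unfold bc
  ring

/-- Wronskian-type antiderivative. -/
noncomputable def bW (ν a b s : ℝ) : ℝ :=
  s ^ (ν + 1) * (b * bg ν (a * s) * bg (ν + 1) (b * s) - a * bg (ν + 1) (a * s) * bg ν (b * s))

lemma bW_hasDerivAt {ν : ℝ} (hν : 0 ≤ ν) (a b : ℝ) {s : ℝ} (hs : 0 < s) :
    HasDerivAt (bW ν a b) ((b - a) * (s ^ ν * (bg ν (a * s) * bg ν (b * s)))) s := by
  have hl : ∀ c : ℝ, HasDerivAt (fun s : ℝ => c * s) c s := fun c => by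
    simpa using (hasDerivAt_id s).const_mul c
  have d0 : ∀ c : ℝ, HasDerivAt (fun s => bg ν (c * s)) (- bg (ν + 1) (c * s) * c) s :=
    fun c => (bg_hasDerivAt hν (c * s)).comp s (hl c)
  have d1 : ∀ c : ℝ, HasDerivAt (fun s => bg (ν + 1) (c * s)) (- bg (ν + 1 + 1) (c * s) * c) s :=
    fun c => (bg_hasDerivAt (by positivity) (c * s)).comp s (hl c)
  have dp : HasDerivAt (fun s : ℝ => s ^ (ν + 1)) ((ν + 1) * s ^ ν) s := by
    simpa using Real.hasDerivAt_rpow_const (p := ν + 1) (Or.inl hs.ne')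
  have := dp.mul ((((d0 a).const_mul b).mul (d1 b)).sub (((d1 a).const_mul a).mul (d0 b)))
  refine this.congr_deriv ?_
  have hsp : s ^ (ν + 1) = s ^ ν * s := by rw [Real.rpow_add hs, Real.rpow_one]
  simp only [Pi.mul_apply, Pi.sub_apply]
  rw [hsp]
  linear_combination
    - b * s ^ ν * bg ν (a * s) * bg_ode hν (b * s) + a * s ^ ν * bg ν (b * s) * bg_ode hν (a * s)

lemma bW_continuous {ν : ℝ} (hν : 0 ≤ ν) (a b : ℝ) : Continuous (bW ν a b) := by
  have c0 := bg_continuous hν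
  have c1 := bg_continuous (show 0 ≤ ν + 1 by positivity)
  have cp : Continuous fun s : ℝ => s ^ (ν + 1) := Real.continuous_rpow_const (by positivity)
  unfold bW
  fun_prop

/-- For `0 ≤ α < 1`, `ν ≥ 0` and two distinct positive zeros `j ≠ j'` of `J_ν`,
the functions `Φ_j(x) = x^((1-α)/2) J_ν(j x^((2-α)/2))` and
`Φ_{j'}(x) = x^((1-α)/2) J_ν(j' x^((2-α)/2))` are orthogonal in `L²(0,1)`. -/
theorem eigenfunctions_orthogonal (α ν j j' : ℝ) (hα0 : 0 ≤ α) (hα1 : α < 1)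
    (hν : 0 ≤ ν) (hj : 0 < j) (hj' : 0 < j')
    (hzero : besselJ ν j = 0) (hzero' : besselJ ν j' = 0) (hne : j ≠ j') :
    (∫ x in Set.Ioo (0 : ℝ) 1,
      (x ^ ((1 - α) / 2) * besselJ ν (j * x ^ ((2 - α) / 2))) *
      (x ^ ((1 - α) / 2) * besselJ ν (j' * x ^ ((2 - α) / 2)))) = 0 := by
  have h2α : 0 < 2 - α := by linarith
  have hb0 : bg ν (j ^ 2 / 4) = 0 := by
    rw [besselJ_eq ν hj] at hzero
    exact (mul_eq_zero.1 hzero).resolve_left (Real.rpow_pos_of_pos (by positivity) _).ne'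
  have hb0' : bg ν (j' ^ 2 / 4) = 0 := by
    rw [besselJ_eq ν hj'] at hzero'
    exact (mul_eq_zero.1 hzero').resolve_left (Real.rpow_pos_of_pos (by positivity) _).ne'
  set a := j ^ 2 / 4 with ha
  set b := j' ^ 2 / 4 with hb
  have hab : b - a ≠ 0 := by
    intro h
    apply hne
    have h1 : j ^ 2 = j' ^ 2 := by rw [ha, hb] at h; linarith
    exact (pow_left_inj₀ hj.le hj'.le two_ne_zero).1 h1
  set f' : ℝ → ℝ := fun x => ((b - a) * ((x ^ (2 - α)) ^ ν *
    (bg ν (a * x ^ (2 - α)) * bg ν (b * x ^ (2 - α))))) * ((2 - α) * x ^ (1 - α)) with hf'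
  have cp : Continuous fun x : ℝ => x ^ (2 - α) := Real.continuous_rpow_const h2α.le
  have cq : Continuous fun x : ℝ => x ^ (1 - α) := Real.continuous_rpow_const (by linarith)
  have cν : Continuous fun x : ℝ => (x ^ (2 - α)) ^ ν :=
    (Real.continuous_rpow_const hν).comp cp
  have c0 := bg_continuous hν
  have cf : Continuous f' := by
    rw [hf']
    fun_prop
  have hFTC : ∫ x in (0 : ℝ)..1, f' x = 0 := by
    rw [intervalIntegral.integral_eq_sub_of_hasDerivAt_of_le (f := fun x => bW ν a b (x ^ (2 - α)))
      zero_le_one ((bW_continuous hν a b).comp cp).continuousOn ?_ (cf.intervalIntegrable _ _)]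
    · rw [Real.zero_rpow h2α.ne', Real.one_rpow]
      unfold bW
      rw [Real.zero_rpow (by positivity : ν + 1 ≠ 0), mul_one, mul_one, hb0, hb0']
      ring
    · intro x hx
      have hp : HasDerivAt (fun x : ℝ => x ^ (2 - α)) ((2 - α) * x ^ (1 - α)) x := by
        have := Real.hasDerivAt_rpow_const (x := x) (p := 2 - α) (Or.inl hx.1.ne')
        rwa [show 2 - α - 1 = 1 - α by ring] at this
      exact HasDerivAt.comp (h := fun x : ℝ => x ^ (2 - α)) x
        (bW_hasDerivAt hν a b (Real.rpow_pos_of_pos hx.1 (2 - α))) hp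
  rw [intervalIntegral.integral_of_le zero_le_one, integral_Ioc_eq_integral_Ioo] at hFTC
  have hcongr : (∫ x in Set.Ioo (0 : ℝ) 1,
      (x ^ ((1 - α) / 2) * besselJ ν (j * x ^ ((2 - α) / 2))) *
      (x ^ ((1 - α) / 2) * besselJ ν (j' * x ^ ((2 - α) / 2)))) =
      ∫ x in Set.Ioo (0 : ℝ) 1, ((j / 2) ^ ν * (j' / 2) ^ ν / ((b - a) * (2 - α))) * f' x := by
    refine setIntegral_congr_fun measurableSet_Ioo fun x hx => ?_
    have hx0 := hx.1
    have hy : 0 < x ^ ((2 - α) / 2) := Real.rpow_pos_of_pos hx0 _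
    have e1 : x ^ (1 - α) = x ^ ((1 - α) / 2) * x ^ ((1 - α) / 2) := by
      rw [← Real.rpow_add hx0]; congr 1; ring
    have e2 : x ^ (2 - α) = x ^ ((2 - α) / 2) * x ^ ((2 - α) / 2) := by
      rw [← Real.rpow_add hx0]; congr 1; ring
    simp only [hf']
    rw [besselJ_eq ν (mul_pos hj hy), besselJ_eq ν (mul_pos hj' hy), e1, e2]
    generalize x ^ ((2 - α) / 2) = y at hy
    rw [show j * y / 2 = j / 2 * y by ring, show j' * y / 2 = j' / 2 * y by ring,
      Real.mul_rpow (by positivity) hy.le, Real.mul_rpow (by positivity) hy.le,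
      Real.mul_rpow hy.le hy.le, show (j * y) ^ 2 / 4 = a * (y * y) by rw [ha]; ring,
      show (j' * y) ^ 2 / 4 = b * (y * y) by rw [hb]; ring]
    have := h2α.ne'
    field_simp
  rw [hcongr, integral_const_mul, hFTC, mul_zero]
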